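/- Let Ω = ⋃_{j=1}^n (a_j, b_j) ⊆ ℝ be a finite union of bounded open intervals of total length 1, let Λ be a spectrum of Ω, and let B ⊆ Λ be a generating set, i.e., span φ(B) = span φ(Λ) in ℂ^{2n}. Then for every x ∈ ℝ: x ∈ Λ if and only if A(φ(x), φ(b)) = 0 for all b ∈ B. In particular, Λ is completely determined by any generating subset B. -/

import Mathlib

open MeasureTheory Set

/-- The exponential function `e_λ(x) = exp(2πiλx)`. -/
noncomputable def expF (lam : ℝ) : ℝ → ℂ :=
  fun x => Complex.exp (2 * (Real.pi : ℂ) * Complex.I * (lam : ℂ) * (x : ℂ))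

/-- `Λ` is a spectrum of `Ω`. -/
def IsSpectrum (Ω Λ : Set ℝ) : Prop :=
  ∃ F : Λ → Lp ℂ 2 (volume.restrict Ω),
    (∀ l : Λ, ⇑(F l) =ᵐ[volume.restrict Ω] expF (l : ℝ)) ∧
    Orthonormal ℂ F ∧
    (Submodule.span ℂ (Set.range F)).topologicalClosure = ⊤

/-- The map `φ : ℝ → ℂ^{2n}`. -/
noncomputable def phiMap (n : ℕ) (a b : Fin n → ℝ) (x : ℝ) : (Fin n → ℂ) × (Fin n → ℂ) :=
  (fun j => Complex.exp (-(2 * (Real.pi : ℂ) * Complex.I * (a j : ℂ) * (x : ℂ))),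
   fun j => Complex.exp (-(2 * (Real.pi : ℂ) * Complex.I * (b j : ℂ) * (x : ℂ))))

/-- The bilinear form `A(z, w) = ⟨z₁, w₁⟩ - ⟨z₂, w₂⟩` on `ℂ^{2n} = ℂⁿ × ℂⁿ`. -/
noncomputable def formA (n : ℕ) (z w : (Fin n → ℂ) × (Fin n → ℂ)) : ℂ :=
  (∑ j, z.1 j * (starRingEnd ℂ) (w.1 j)) - (∑ j, z.2 j * (starRingEnd ℂ) (w.2 j))

/-!
Integrating the derivative of `t ↦ e_{y-x}(t)` over each interval gives the Green identity
`2πi(x - y) ∫_Ω conj(e_x) e_y = A(φ(x), φ(y))`. Hence `A(φ(x), φ(y)) = 0` means that `x = y` or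
that `e_x` and `e_y` are orthogonal in `L²(Ω)`, and a complete orthogonal family of exponentials
already contains every exponential that is orthogonal to all its other members. Since `A(φ(x), ·)`
is conjugate-linear, testing it on `φ(Λ)` amounts to testing it on any set with the same span.
-/

theorem expF_eq_exp_ofReal_mul_I (x t : ℝ) :
    expF x t = Complex.exp ((2 * Real.pi * x * t : ℝ) * Complex.I) := by
  unfold expF
  congr 1
  push_cast
  ring

theorem norm_expF (x t : ℝ) : ‖expF x t‖ = 1 := by
  rw [expF_eq_exp_ofReal_mul_I, Complex.norm_exp_ofReal_mul_I]

theorem hasDerivAt_expF (x t : ℝ) :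
    HasDerivAt (expF x) (2 * Real.pi * Complex.I * x * expF x t) t := by
  have hexponent := (hasDerivAt_id t).ofReal_comp.const_mul
    (2 * (Real.pi : ℂ) * Complex.I * (x : ℂ))
  rw [Complex.ofReal_one, mul_one] at hexponent
  exact hexponent.cexp.congr_deriv (mul_comm _ _)

theorem continuous_expF (x : ℝ) : Continuous (expF x) :=
  continuous_iff_continuousAt.2 fun t => (hasDerivAt_expF x t).continuousAt

theorem memLp_expF (x : ℝ) (p : ENNReal) (μ : Measure ℝ) [IsFiniteMeasure μ] :
    MemLp (expF x) p μ :=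
  .of_bound (continuous_expF x).aestronglyMeasurable 1 (.of_forall fun t => (norm_expF x t).le)

-- The factors of the exponent are in the order in which they occur in `phiMap`.
theorem conj_expF (x t : ℝ) :
    starRingEnd ℂ (expF x t) = Complex.exp (-(2 * Real.pi * Complex.I * t * x)) := by
  rw [expF_eq_exp_ofReal_mul_I, ← Complex.exp_conj, map_mul, Complex.conj_ofReal, Complex.conj_I]
  congr 1
  push_cast
  ring

theorem inner_expF_expF (x y t : ℝ) : inner ℂ (expF x t) (expF y t) = expF (y - x) t := by
  rw [RCLike.inner_apply, conj_expF, expF, expF, ← Complex.exp_add]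
  congr 1
  push_cast
  ring

theorem mul_integral_Ioo_expF (x : ℝ) {a b : ℝ} (hab : a ≤ b) :
    2 * Real.pi * Complex.I * x * ∫ t in Ioo a b, expF x t = expF x b - expF x a := by
  rw [← integral_Ioc_eq_integral_Ioo, ← intervalIntegral.integral_of_le hab,
    ← intervalIntegral.integral_const_mul]
  exact intervalIntegral.integral_eq_sub_of_hasDerivAt (fun t _ => hasDerivAt_expF x t)
    ((continuous_const.mul (continuous_expF x)).intervalIntegrable a b)

section BoundaryForm

variable {n : ℕ}

theorem formA_phiMap (a b : Fin n → ℝ) (x y : ℝ) :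
    formA n (phiMap n a b x) (phiMap n a b y) =
      ∑ j, (expF (y - x) (a j) - expF (y - x) (b j)) := by
  simp only [formA, phiMap, ← conj_expF, RCLike.conj_conj, ← inner_expF_expF, RCLike.inner_apply',
    Finset.sum_sub_distrib]

theorem mul_integral_inner_expF_eq_formA {a b : Fin n → ℝ} (hab : ∀ j, a j ≤ b j)
    (hdisj : Pairwise fun i j => Disjoint (Ioo (a i) (b i)) (Ioo (a j) (b j))) (x y : ℝ) :
    2 * Real.pi * Complex.I * (x - y) *
        ∫ t in ⋃ j, Ioo (a j) (b j), inner ℂ (expF x t) (expF y t) =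
      formA n (phiMap n a b x) (phiMap n a b y) := by
  have hint (j : Fin n) : IntegrableOn (expF (y - x)) (Ioo (a j) (b j)) :=
    (continuous_expF _).integrableOn_Icc.mono_set Ioo_subset_Icc_self
  simp only [inner_expF_expF]
  rw [integral_iUnion_fintype (fun _ => measurableSet_Ioo) hdisj hint, Finset.mul_sum,
    formA_phiMap]
  refine Finset.sum_congr rfl fun j _ => ?_
  rw [← neg_sub (expF _ (b j)), ← mul_integral_Ioo_expF _ (hab j)]
  push_cast
  ring

theorem formA_phiMap_eq_zero_iff {a b : Fin n → ℝ} (hab : ∀ j, a j ≤ b j)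
    (hdisj : Pairwise fun i j => Disjoint (Ioo (a i) (b i)) (Ioo (a j) (b j))) (x y : ℝ) :
    formA n (phiMap n a b x) (phiMap n a b y) = 0 ↔
      x = y ∨ ∫ t in ⋃ j, Ioo (a j) (b j), inner ℂ (expF x t) (expF y t) = 0 := by
  rw [← mul_integral_inner_expF_eq_formA hab hdisj, mul_eq_zero,
    mul_eq_zero_iff_left Complex.two_pi_I_ne_zero, sub_eq_zero, Complex.ofReal_inj]

/-- The functional `A(z, ·)`, bundled as a conjugate-linear map so that its zeros form a
submodule. -/
noncomputable def formAFunctional (z : (Fin n → ℂ) × (Fin n → ℂ)) :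
    ((Fin n → ℂ) × (Fin n → ℂ)) →ₗ⋆[ℂ] ℂ where
  toFun := formA n z
  map_add' u v := by
    simp only [formA, Prod.fst_add, Prod.snd_add, Pi.add_apply, map_add, mul_add,
      Finset.sum_add_distrib, add_sub_add_comm]
  map_smul' c u := by
    simp only [formA, Prod.smul_fst, Prod.smul_snd, Pi.smul_apply, smul_eq_mul, map_mul,
      mul_sub, Finset.mul_sum, mul_left_comm]

theorem span_le_ker_formAFunctional_iff {S : Set ((Fin n → ℂ) × (Fin n → ℂ))}
    {z : (Fin n → ℂ) × (Fin n → ℂ)} :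
    Submodule.span ℂ S ≤ (formAFunctional z).ker ↔ ∀ w ∈ S, formA n z w = 0 := by
  rw [Submodule.span_le, subset_def]
  rfl

theorem forall_formA_eq_zero_iff_of_span_eq {S T : Set ((Fin n → ℂ) × (Fin n → ℂ))}
    (hST : Submodule.span ℂ S = Submodule.span ℂ T) (z : (Fin n → ℂ) × (Fin n → ℂ)) :
    (∀ w ∈ S, formA n z w = 0) ↔ ∀ w ∈ T, formA n z w = 0 := by
  rw [← span_le_ker_formAFunctional_iff, hST, span_le_ker_formAFunctional_iff]

end BoundaryForm

theorem inner_eq_integral_of_ae_eq {α 𝕜 E : Type*} [RCLike 𝕜] [MeasurableSpace α]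
    {μ : Measure α} [NormedAddCommGroup E] [InnerProductSpace 𝕜 E] {f g : Lp E 2 μ} {u v : α → E}
    (hf : f =ᵐ[μ] u) (hg : g =ᵐ[μ] v) : inner 𝕜 f g = ∫ t, inner 𝕜 (u t) (v t) ∂μ := by
  rw [L2.inner_def]
  refine integral_congr_ae ?_
  filter_upwards [hf, hg] with t hft hgt
  rw [hft, hgt]

theorem eq_zero_of_forall_inner_eq_zero {ι 𝕜 E : Type*} [RCLike 𝕜] [NormedAddCommGroup E]
    [InnerProductSpace 𝕜 E] {v : ι → E}
    (hv : (Submodule.span 𝕜 (range v)).topologicalClosure = ⊤) {x : E}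
    (hx : ∀ i, inner 𝕜 x (v i) = 0) : x = 0 := by
  have hfunctional : innerSL 𝕜 x = 0 :=
    ContinuousLinearMap.ext_on (Submodule.dense_iff_topologicalClosure_eq_top.2 hv)
      (forall_mem_range.2 hx)
  exact inner_self_eq_zero.1 (DFunLike.congr_fun hfunctional x)

namespace IsSpectrum

variable {Ω Λ : Set ℝ}

theorem integral_inner_expF_eq_zero (hΛ : IsSpectrum Ω Λ) {x y : ℝ} (hx : x ∈ Λ) (hy : y ∈ Λ)
    (hxy : x ≠ y) : ∫ t in Ω, inner ℂ (expF x t) (expF y t) = 0 := by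
  obtain ⟨F, hF, horthonormal, -⟩ := hΛ
  rw [← inner_eq_integral_of_ae_eq (hF ⟨x, hx⟩) (hF ⟨y, hy⟩)]
  exact horthonormal.inner_eq_zero (Subtype.coe_ne_coe.1 hxy)

theorem ae_eq_zero_of_forall_integral_eq_zero (hΛ : IsSpectrum Ω Λ) {f : ℝ → ℂ}
    (hf : MemLp f 2 (volume.restrict Ω))
    (horth : ∀ y ∈ Λ, ∫ t in Ω, inner ℂ (f t) (expF y t) = 0) : f =ᵐ[volume.restrict Ω] 0 := by
  obtain ⟨F, hF, -, hdense⟩ := hΛ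
  have hzero : hf.toLp f = 0 := eq_zero_of_forall_inner_eq_zero hdense fun l => by
    rw [inner_eq_integral_of_ae_eq hf.coeFn_toLp (hF l), horth l l.2]
  exact (MemLp.toLp_eq_toLp_iff hf .zero).1 hzero

theorem mem_of_forall_eq_or_integral_eq_zero (hΛ : IsSpectrum Ω Λ) (hΩ₀ : volume Ω ≠ 0)
    (hΩ : volume Ω ≠ ⊤) {x : ℝ}
    (horth : ∀ y ∈ Λ, x = y ∨ ∫ t in Ω, inner ℂ (expF x t) (expF y t) = 0) : x ∈ Λ := by
  by_contra hx
  have : IsFiniteMeasure (volume.restrict Ω) := isFiniteMeasure_restrict.2 hΩ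
  have : (ae (volume.restrict Ω)).NeBot := ae_restrict_neBot.2 hΩ₀
  have hzero : expF x =ᵐ[volume.restrict Ω] 0 :=
    hΛ.ae_eq_zero_of_forall_integral_eq_zero (memLp_expF x 2 _) fun y hy =>
      (horth y hy).resolve_left fun hxy => hx (hxy ▸ hy)
  obtain ⟨t, ht⟩ := hzero.exists
  exact norm_ne_zero_iff.1 (norm_expF x t ▸ one_ne_zero) ht

theorem mem_iff_forall_eq_or_integral_eq_zero (hΛ : IsSpectrum Ω Λ) (hΩ₀ : volume Ω ≠ 0)
    (hΩ : volume Ω ≠ ⊤) (x : ℝ) :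
    x ∈ Λ ↔ ∀ y ∈ Λ, x = y ∨ ∫ t in Ω, inner ℂ (expF x t) (expF y t) = 0 :=
  ⟨fun hx _ hy => or_iff_not_imp_left.2 (hΛ.integral_inner_expF_eq_zero hx hy),
    hΛ.mem_of_forall_eq_or_integral_eq_zero hΩ₀ hΩ⟩

end IsSpectrum

theorem spectrum_determined_by_generating_set_general {n : ℕ} {a b : Fin n → ℝ} {Ω : Set ℝ}
    (hΩ : Ω = ⋃ j, Ioo (a j) (b j)) (hab : ∀ j, a j ≤ b j)
    (hdisj : Pairwise fun i j => Disjoint (Ioo (a i) (b i)) (Ioo (a j) (b j)))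
    (hvol : volume Ω = 1) {Λ : Set ℝ} (hΛ : IsSpectrum Ω Λ)
    {S : Set ((Fin n → ℂ) × (Fin n → ℂ))}
    (hS : Submodule.span ℂ S = Submodule.span ℂ (phiMap n a b '' Λ)) (x : ℝ) :
    x ∈ Λ ↔ ∀ w ∈ S, formA n (phiMap n a b x) w = 0 :=
  calc x ∈ Λ
    _ ↔ ∀ y ∈ Λ, x = y ∨ ∫ t in Ω, inner ℂ (expF x t) (expF y t) = 0 :=
      hΛ.mem_iff_forall_eq_or_integral_eq_zero (by simp [hvol]) (by simp [hvol]) x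
    _ ↔ ∀ y ∈ Λ, formA n (phiMap n a b x) (phiMap n a b y) = 0 := by
      simp only [hΩ, formA_phiMap_eq_zero_iff hab hdisj]
    _ ↔ ∀ w ∈ phiMap n a b '' Λ, formA n (phiMap n a b x) w = 0 := by
      rw [forall_mem_image]
    _ ↔ ∀ w ∈ S, formA n (phiMap n a b x) w = 0 :=
      (forall_formA_eq_zero_iff_of_span_eq hS _).symm

/-- A spectrum `Λ` is determined by any generating set `B ⊆ Λ`:
`x ∈ Λ` iff `A(φ(x), φ(b)) = 0` for all `b ∈ B`. -/
theorem spectrum_determined_by_generating_set (n : ℕ) (a b : Fin n → ℝ) (Ω : Set ℝ)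
    (hΩ : Ω = ⋃ j, Ioo (a j) (b j))
    (hab : ∀ j, a j < b j)
    (hdisj : Pairwise fun i j => Disjoint (Ioo (a i) (b i)) (Ioo (a j) (b j)))
    (hvol : volume Ω = 1)
    (Λ : Set ℝ) (hΛ : IsSpectrum Ω Λ)
    (B : Set ℝ) (hBΛ : B ⊆ Λ)
    (hgen : Submodule.span ℂ (phiMap n a b '' B) = Submodule.span ℂ (phiMap n a b '' Λ)) :
    ∀ x : ℝ, x ∈ Λ ↔ ∀ y ∈ B, formA n (phiMap n a b x) (phiMap n a b y) = 0 := fun x =>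
  (spectrum_determined_by_generating_set_general hΩ (fun j => (hab j).le) hdisj hvol hΛ hgen
    x).trans forall_mem_image
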